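/- arXiv:1902.06127 — 2 statements merged into one kernel-verified Lean document; each statement's English description precedes it below -/
import Mathlib

section
/- For every 0 ≤ e ≤ 1 and every c > 0, the map σ^{e,c} is Lipschitz continuous on ℝ with Lipschitz constant c^{e−1}, i.e. |σ^{e,c}(a) − σ^{e,c}(b)| ≤ c^{e−1}·|a − b| for all a, b ∈ ℝ. Consequently, if l : ℝ → ℝ is L-Lipschitz (L > 0), then the e-exponentiated loss l ∘ σ^{e,c} is (c^{e−1}·L)-Lipschitz on ℝ. -/
/-- The `e`-exponentiated transformation `σ^{e,c}`. -/
noncomputable def sigmaE (e c : ℝ) (x : ℝ) : ℝ :=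
  if c ≤ |x| then (if 0 ≤ x then (1 : ℝ) else -1) * |x| ^ e else c ^ (e - 1) * x

/-!
`σ^{e,c}` is odd, so it is enough to bound it on `[0, ∞)`. There it is linear with slope `c^(e-1)`
on `[0, c]` and equal to `x ↦ x^e` on `[c, ∞)`, where the derivative `e * x^(e-1)` is largest in
absolute value at `c`, because `e - 1 ≤ 0`. The two pieces agree at `c`, and on the line Lipschitz
bounds on adjacent intervals add up. This gives the constant `max 1 |e| * c^(e-1)` for every
`e ≤ 1`, which is `c^(e-1)` when `|e| ≤ 1`.
-/

open Set

theorem lipschitzOnWith_union_of_isGreatest_of_isLeast {α : Type*} [PseudoEMetricSpace α]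
    {f : ℝ → α} {K : NNReal} {s t : Set ℝ} {m : ℝ} (hfs : LipschitzOnWith K f s)
    (hft : LipschitzOnWith K f t) (hs : IsGreatest s m) (ht : IsLeast t m) :
    LipschitzOnWith K f (s ∪ t) := by
  have hacross {x y : ℝ} (hx : x ∈ s) (hy : y ∈ t) : edist (f x) (f y) ≤ K * edist x y := by
    have hadd : edist x m + edist m y = edist x y := by
      simp only [edist_dist]
      rw [← ENNReal.ofReal_add dist_nonneg dist_nonneg,
        dist_add_dist_of_mem_segment (Icc_subset_segment ⟨hs.2 hx, ht.2 hy⟩)]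
    calc edist (f x) (f y)
      _ ≤ edist (f x) (f m) + edist (f m) (f y) := edist_triangle _ _ _
      _ ≤ K * edist x m + K * edist m y := add_le_add (hfs hx hs.1) (hft ht.1 hy)
      _ = K * edist x y := by rw [← mul_add, hadd]
  rintro x (hx | hx) y (hy | hy)
  · exact hfs hx hy
  · exact hacross hx hy
  · rw [edist_comm, edist_comm x]
    exact hacross hy hx
  · exact hft hx hy

theorem lipschitzWith_of_odd_of_lipschitzOnWith_Ici {E : Type*} [SeminormedAddCommGroup E]
    {f : ℝ → E} {K : NNReal} (hodd : f.Odd) (hf : LipschitzOnWith K f (Ici 0)) :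
    LipschitzWith K f := by
  have hf_neg : LipschitzOnWith K f (Iic 0) := .of_dist_le_mul fun x hx y hy => by
    simpa only [hodd x, hodd y, dist_neg_neg] using
      hf.dist_le_mul (-x) (mem_Ici.2 (neg_nonneg.2 hx)) (-y) (mem_Ici.2 (neg_nonneg.2 hy))
  rw [← lipschitzOnWith_univ, ← Iic_union_Ici (a := (0 : ℝ))]
  exact lipschitzOnWith_union_of_isGreatest_of_isLeast hf_neg hf isGreatest_Iic isLeast_Ici

theorem lipschitzOnWith_rpow_Ici {e c : ℝ} (he : e ≤ 1) (hc : 0 < c) :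
    LipschitzOnWith (|e| * c ^ (e - 1)).toNNReal (fun x : ℝ => x ^ e) (Ici c) := by
  have hderiv (x : ℝ) (hx : x ∈ Ici c) :
      HasDerivWithinAt (fun x : ℝ => x ^ e) (e * x ^ (e - 1)) (Ici c) x :=
    (Real.hasDerivAt_rpow_const (Or.inl (hc.trans_le hx).ne')).hasDerivWithinAt
  refine (convex_Ici c).lipschitzOnWith_of_nnnorm_hasDerivWithin_le hderiv fun x hx => ?_
  have hpow : x ^ (e - 1) ≤ c ^ (e - 1) :=
    Real.rpow_le_rpow_of_nonpos hc hx (sub_nonpos.2 he)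
  rw [← norm_toNNReal, norm_mul, Real.norm_eq_abs,
    Real.norm_of_nonneg (Real.rpow_nonneg (hc.le.trans hx) _)]
  exact Real.toNNReal_mono (mul_le_mul_of_nonneg_left hpow (abs_nonneg e))

theorem odd_sigmaE {e c : ℝ} (hc : 0 < c) : (sigmaE e c).Odd := by
  intro x
  rcases lt_trichotomy x 0 with hx | rfl | hx
  · by_cases h : c ≤ |x| <;> simp [sigmaE, hx.le, hx.not_ge, h]
  · simp [sigmaE, hc.not_ge]
  · by_cases h : c ≤ |x| <;> simp [sigmaE, hx.le, hx.not_ge, h]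

theorem sigmaE_eqOn_Ici {e c : ℝ} (hc : 0 ≤ c) :
    EqOn (sigmaE e c) (fun x => x ^ e) (Ici c) := by
  intro x (hx : c ≤ x)
  have hx₀ : 0 ≤ x := hc.trans hx
  simp [sigmaE, abs_of_nonneg hx₀, hx₀, hx]

theorem sigmaE_eqOn_Icc {e c : ℝ} (hc : 0 < c) :
    EqOn (sigmaE e c) (fun x => c ^ (e - 1) * x) (Icc 0 c) := by
  rintro x ⟨hx₀, hxc⟩
  rcases hxc.eq_or_lt with rfl | hxc
  · rw [sigmaE_eqOn_Ici hc.le self_mem_Ici]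
    simp only [Real.rpow_sub_one hc.ne', div_mul_cancel₀ _ hc.ne']
  · simp [sigmaE, abs_of_nonneg hx₀, hxc.not_ge]

theorem lipschitzWith_sigmaE {e c : ℝ} (he : e ≤ 1) (hc : 0 < c) :
    LipschitzWith (max 1 |e| * c ^ (e - 1)).toNNReal (sigmaE e c) := by
  have hK : 0 ≤ c ^ (e - 1) := Real.rpow_nonneg hc.le _
  have hnear : LipschitzOnWith (c ^ (e - 1)).toNNReal (sigmaE e c) (Icc 0 c) :=
    .of_dist_le' fun x hx y hy => by
      rw [sigmaE_eqOn_Icc hc hx, sigmaE_eqOn_Icc hc hy, Real.dist_eq, Real.dist_eq, ← mul_sub,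
        abs_mul, abs_of_nonneg hK]
  have hfar : LipschitzOnWith (|e| * c ^ (e - 1)).toNNReal (sigmaE e c) (Ici c) :=
    fun x hx y hy => by
      simpa only [sigmaE_eqOn_Ici hc.le hx, sigmaE_eqOn_Ici hc.le hy] using
        lipschitzOnWith_rpow_Ici he hc hx hy
  refine lipschitzWith_of_odd_of_lipschitzOnWith_Ici (odd_sigmaE hc) ?_
  rw [← Icc_union_Ici_eq_Ici hc.le]
  exact lipschitzOnWith_union_of_isGreatest_of_isLeast
    (hnear.weaken (Real.toNNReal_mono (le_mul_of_one_le_left hK (le_max_left _ _))))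
    (hfar.weaken (Real.toNNReal_mono (mul_le_mul_of_nonneg_right (le_max_right _ _) hK)))
    (isGreatest_Icc hc.le) isLeast_Ici

theorem sigmaE_lipschitz_general {α : Type*} [PseudoMetricSpace α] {e c : ℝ} (he : e ≤ 1)
    (hc : 0 < c) :
    (∀ a b : ℝ, |sigmaE e c a - sigmaE e c b| ≤ max 1 |e| * c ^ (e - 1) * |a - b|) ∧
    (∀ (l : ℝ → α) (L : ℝ), (∀ a b : ℝ, dist (l a) (l b) ≤ L * |a - b|) →
      ∀ a b : ℝ, dist (l (sigmaE e c a)) (l (sigmaE e c b)) ≤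
        max 1 |e| * c ^ (e - 1) * L * |a - b|) := by
  have hσ (a b : ℝ) : |sigmaE e c a - sigmaE e c b| ≤ max 1 |e| * c ^ (e - 1) * |a - b| := by
    have hK : 0 ≤ max 1 |e| * c ^ (e - 1) := by positivity
    simpa only [Real.coe_toNNReal _ hK, Real.dist_eq] using
      (lipschitzWith_sigmaE he hc).dist_le_mul a b
  refine ⟨hσ, fun l L hl a b => ?_⟩
  have hL : 0 ≤ L := by simpa using dist_nonneg.trans (hl 1 0)
  calc dist (l (sigmaE e c a)) (l (sigmaE e c b))
    _ ≤ L * |sigmaE e c a - sigmaE e c b| := hl _ _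
    _ ≤ L * (max 1 |e| * c ^ (e - 1) * |a - b|) := mul_le_mul_of_nonneg_left (hσ a b) hL
    _ = max 1 |e| * c ^ (e - 1) * L * |a - b| := by ring

/-- For `0 ≤ e ≤ 1` and `c > 0`, the map `σ^{e,c}` is Lipschitz on `ℝ` with constant
`c^(e-1)`, and consequently for any `L`-Lipschitz loss `l : ℝ → ℝ` (`L > 0`), the
`e`-exponentiated loss `l ∘ σ^{e,c}` is `(c^(e-1)·L)`-Lipschitz on `ℝ`. -/
theorem sigmaE_lipschitz (e c : ℝ) (he₀ : 0 ≤ e) (he₁ : e ≤ 1) (hc : 0 < c) :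
    (∀ a b : ℝ, |sigmaE e c a - sigmaE e c b| ≤ c ^ (e - 1) * |a - b|) ∧
    (∀ (l : ℝ → ℝ) (L : ℝ), 0 < L → (∀ a b : ℝ, |l a - l b| ≤ L * |a - b|) →
      ∀ a b : ℝ, |l (sigmaE e c a) - l (sigmaE e c b)| ≤ c ^ (e - 1) * L * |a - b|) := by
  have h := sigmaE_lipschitz_general (α := ℝ) he₁ hc
  rw [abs_of_nonneg he₀, max_eq_left he₁, one_mul] at h
  exact ⟨h.1, fun l L _ => h.2 l L⟩
end

section
/- Let l : ℝ → ℝ be a convex differentiable function whose derivative l′ satisfies l′(t) ≤ 0 for all t ∈ ℝ, let 0 ≤ e < 1 and 0 < c ≤ 1, and let ŷ < −1. Then l ∘ σ^{e,c} is differentiable at ŷ with derivative e·|ŷ|^{e−1}·l′(σ^{e,c}(ŷ)), and |e·|ŷ|^{e−1}·l′(σ^{e,c}(ŷ))| ≤ |l′(ŷ)|; moreover the inequality is strict whenever l′(ŷ) < 0. (This expresses that the e-exponentiated loss has strictly smaller slope than the original convex loss at large negative margins, making it more robust to outliers.) -/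
/-!
For `y ≤ -1` the transformation moves `y` to the right, `y ≤ σ(y)`, so convexity gives
`l′(y) ≤ l′(σ(y)) ≤ 0`; the chain rule multiplies `l′(σ(y))` by `σ′(y) = e |y| ^ (e - 1)`,
which has absolute value less than `1`.
-/

theorem sigmaE_of_neg {e c x : ℝ} (hx : x < 0) (hcx : c ≤ -x) : sigmaE e c x = -(-x) ^ e := by
  simp [sigmaE, abs_of_neg hx, hcx, hx.not_ge]

theorem hasDerivAt_sigmaE_of_neg {e c x : ℝ} (hx : x < 0) (hcx : c < -x) :
    HasDerivAt (sigmaE e c) (e * |x| ^ (e - 1)) x := by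
  have hpow : HasDerivAt (fun t : ℝ ↦ -(-t) ^ e) (e * |x| ^ (e - 1)) x := by
    rw [abs_of_neg hx]
    exact ((hasDerivAt_neg x).rpow_const (.inl (neg_ne_zero.2 hx.ne))).neg.congr_deriv (by ring)
  refine hpow.congr_of_eventuallyEq ?_
  filter_upwards [Iio_mem_nhds hx, Iio_mem_nhds (lt_neg_of_lt_neg hcx)] with t ht hct
  exact sigmaE_of_neg ht (le_neg_of_le_neg hct.le)

theorem le_sigmaE_of_le_neg_one {e c x : ℝ} (he : e ≤ 1) (hx : x ≤ -1) (hcx : c ≤ -x) :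
    x ≤ sigmaE e c x := by
  rw [sigmaE_of_neg (by linarith) hcx, le_neg]
  exact Real.rpow_le_self_of_one_le (le_neg_of_le_neg hx) he

theorem abs_mul_rpow_sub_one_lt_one {e r : ℝ} (he : |e| < 1) (hr : 1 ≤ r) :
    |e * r ^ (e - 1)| < 1 := by
  have hpow_nonneg : 0 ≤ r ^ (e - 1) := Real.rpow_nonneg (zero_le_one.trans hr) _
  have hpow_le_one : r ^ (e - 1) ≤ 1 :=
    Real.rpow_le_one_of_one_le_of_nonpos hr (sub_nonpos.2 (abs_lt.1 he).2.le)
  rw [abs_mul, abs_of_nonneg hpow_nonneg]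
  exact (mul_le_of_le_one_right (abs_nonneg e) hpow_le_one).trans_lt he

theorem deriv_le_deriv_of_convexOn {S : Set ℝ} {f : ℝ → ℝ} {x y : ℝ} (hf : ConvexOn ℝ S f)
    (hx : x ∈ S) (hy : y ∈ S) (hxy : x ≤ y) (hfx : DifferentiableAt ℝ f x)
    (hfy : DifferentiableAt ℝ f y) : deriv f x ≤ deriv f y := by
  obtain rfl | hlt := hxy.eq_or_lt
  · rfl
  · exact (hf.deriv_le_slope hx hy hlt hfx).trans (hf.slope_le_deriv hx hy hlt hfy)

theorem exponentiated_loss_smaller_slope_general {S : Set ℝ} {l : ℝ → ℝ} {e c y : ℝ}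
    (hconv : ConvexOn ℝ S l) (hyS : y ∈ S) (hσS : sigmaE e c y ∈ S)
    (hdiff : DifferentiableAt ℝ l y) (hdiffσ : DifferentiableAt ℝ l (sigmaE e c y))
    (hderivσ : deriv l (sigmaE e c y) ≤ 0) (he : |e| < 1) (hy : y ≤ -1) (hcy : c < -y) :
    HasDerivAt (l ∘ sigmaE e c) (e * |y| ^ (e - 1) * deriv l (sigmaE e c y)) y ∧
    |e * |y| ^ (e - 1) * deriv l (sigmaE e c y)| ≤ |deriv l y| ∧
    (deriv l y < 0 → |e * |y| ^ (e - 1) * deriv l (sigmaE e c y)| < |deriv l y|) := by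
  have hy_neg : y < 0 := by linarith
  have hfactor : |e * |y| ^ (e - 1)| < 1 :=
    abs_mul_rpow_sub_one_lt_one he (le_abs.2 (.inr (le_neg_of_le_neg hy)))
  have hslope : |deriv l (sigmaE e c y)| ≤ |deriv l y| :=
    abs_le_abs_of_nonpos hderivσ <| deriv_le_deriv_of_convexOn hconv hyS hσS
      (le_sigmaE_of_le_neg_one (abs_lt.1 he).2.le hy hcy.le) hdiff hdiffσ
  have hle : |e * |y| ^ (e - 1) * deriv l (sigmaE e c y)| ≤
      |e * |y| ^ (e - 1)| * |deriv l y| := by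
    rw [abs_mul]
    gcongr
  refine ⟨?_, ?_, fun hlt ↦ ?_⟩
  · rw [mul_comm]
    exact hdiffσ.hasDerivAt.comp y (hasDerivAt_sigmaE_of_neg hy_neg hcy)
  · exact hle.trans (mul_le_of_le_one_left (abs_nonneg _) hfactor.le)
  · exact hle.trans_lt (mul_lt_of_lt_one_left (abs_pos.2 hlt.ne) hfactor)

/-- Let `l : ℝ → ℝ` be a convex differentiable loss whose derivative is everywhere
nonpositive, let `0 ≤ e < 1`, `0 < c ≤ 1`, and `ŷ < -1`.  Then the `e`-exponentiated loss
`l ∘ σ^{e,c}` is differentiable at `ŷ` with derivative `e·|ŷ|^(e-1)·l′(σ^{e,c}(ŷ))`, whose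
absolute value is at most `|l′(ŷ)|`, strictly so when `l′(ŷ) < 0`. -/
theorem exponentiated_loss_smaller_slope (l : ℝ → ℝ)
    (hconv : ConvexOn ℝ Set.univ l) (hdiff : Differentiable ℝ l)
    (hderiv : ∀ t : ℝ, deriv l t ≤ 0)
    (e c : ℝ) (he₀ : 0 ≤ e) (he₁ : e < 1) (hc₀ : 0 < c) (hc₁ : c ≤ 1)
    (yhat : ℝ) (hy : yhat < -1) :
    HasDerivAt (l ∘ sigmaE e c) (e * |yhat| ^ (e - 1) * deriv l (sigmaE e c yhat)) yhat ∧
    |e * |yhat| ^ (e - 1) * deriv l (sigmaE e c yhat)| ≤ |deriv l yhat| ∧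
    (deriv l yhat < 0 →
      |e * |yhat| ^ (e - 1) * deriv l (sigmaE e c yhat)| < |deriv l yhat|) :=
  exponentiated_loss_smaller_slope_general hconv (Set.mem_univ _) (Set.mem_univ _) (hdiff _)
    (hdiff _) (hderiv _) (abs_lt.2 ⟨by linarith, he₁⟩) hy.le (by linarith)
end
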